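/- arXiv:1712.01445 — 5 statements merged into one kernel-verified Lean document; each statement's English description precedes it below -/
import Mathlib

section
/- Let θ ∈ ℝ, d > 0, ε ≥ 0, β ≥ 0, and set γ := √(εβ). Define r := (cos θ, sin θ, 0)ᵀ ∈ ℝ³, a := (−sin θ, cos θ, d)ᵀ ∈ ℝ³, and Ψ := ε r rᵀ + β a aᵀ + γ (r aᵀ + a rᵀ). Then: (i) Ψ = u uᵀ with u := √ε · r + √β · a, so Ψ is positive semidefinite of rank at most one; (ii) trace(Ψ) = ε + β(1 + d²); (iii) Ψ u = (ε + β(1 + d²)) u, i.e. u is an eigenvector of Ψ with eigenvalue ε + β(1 + d²); and (iv) if ε > 0 or β > 0, this eigenvalue is positive and Ψ has rank exactly one. -/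
/-!
Since `√(εβ) = √ε √β`, the matrix `Ψ` is the expanded form of `u uᵀ` with `u = √ε r + √β a`.
All the claims then follow from `uᵀu = ε + β(1 + d²)`, which holds because `r` is a unit vector
orthogonal to `a` and `‖a‖² = 1 + d²`: the number `uᵀu` is the trace of `u uᵀ` and its eigenvalue
on `u`, and where it is positive `u` is nonzero, so that `u uᵀ` has rank exactly one.
-/

open Matrix Real

/-- Theorem 1 in concrete form: the net NLOS information gain matrix Ψ is a
rank-one PSD matrix with trace (eigenvalue) ε + β(1 + d²). -/
theorem net_nlos_gain_concrete (θ d ε β : ℝ) (hd : 0 < d) (hε : 0 ≤ ε) (hβ : 0 ≤ β) :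
    let γ := Real.sqrt (ε * β)
    let r : Fin 3 → ℝ := ![Real.cos θ, Real.sin θ, 0]
    let a : Fin 3 → ℝ := ![-Real.sin θ, Real.cos θ, d]
    let Ψ : Matrix (Fin 3) (Fin 3) ℝ :=
      ε • vecMulVec r r + β • vecMulVec a a + γ • (vecMulVec r a + vecMulVec a r)
    let u : Fin 3 → ℝ := Real.sqrt ε • r + Real.sqrt β • a
    Ψ = vecMulVec u u ∧ Ψ.PosSemidef ∧ Ψ.rank ≤ 1 ∧
      Ψ.trace = ε + β * (1 + d ^ 2) ∧
      Ψ *ᵥ u = (ε + β * (1 + d ^ 2)) • u ∧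
      ((0 < ε ∨ 0 < β) → 0 < ε + β * (1 + d ^ 2) ∧ Ψ.rank = 1) := by
  intro γ r a Ψ u
  have hγ : γ = √ε * √β := Real.sqrt_mul hε β
  have hΨ : Ψ = vecMulVec u u := by
    ext i j
    simp only [Ψ, u, hγ, Matrix.add_apply, Matrix.smul_apply, vecMulVec_apply, Pi.add_apply,
      Pi.smul_apply, smul_eq_mul]
    linear_combination -(r i * r j) * Real.mul_self_sqrt hε - (a i * a j) * Real.mul_self_sqrt hβ
  have huu : u ⬝ᵥ u = ε + β * (1 + d ^ 2) := by
    simp only [u, r, a, dotProduct, Fin.sum_univ_three, Pi.add_apply, Pi.smul_apply, smul_eq_mul,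
      cons_val]
    linear_combination (√ε * √ε + √β * √β) * Real.sin_sq_add_cos_sq θ +
      Real.mul_self_sqrt hε + (1 + d ^ 2) * Real.mul_self_sqrt hβ
  have hrank : Ψ.rank ≤ 1 := hΨ ▸ rank_vecMulVec_le u u
  have heig : Ψ *ᵥ u = (ε + β * (1 + d ^ 2)) • u := by
    rw [hΨ, vecMulVec_mulVec, huu, op_smul_eq_smul]
  refine ⟨hΨ, ?_, hrank, ?_, heig, fun h => ?_⟩
  · rw [hΨ]
    simpa using posSemidef_vecMulVec_self_star u
  · rw [hΨ, trace_vecMulVec, huu]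
  · have hpos : 0 < ε + β * (1 + d ^ 2) := by
      rcases h with h | h <;> positivity
    refine ⟨hpos, le_antisymm hrank (Nat.one_le_iff_ne_zero.mpr fun h0 => ?_)⟩
    have hu : u = 0 := by
      have h1 : Ψ *ᵥ u = 0 := by
        have h2 : Ψ.mulVecLin u ∈ LinearMap.range Ψ.mulVecLin := ⟨u, rfl⟩
        rw [Submodule.finrank_eq_zero.mp h0] at h2
        simpa using h2
      rw [heig] at h1
      exact (smul_eq_zero.mp h1).resolve_left hpos.ne'
    rw [hu, zero_dotProduct] at huu
    exact hpos.ne huu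
end

section
/- Let J be a 3×3 real symmetric positive definite matrix, let P be a 3×3 real matrix, and let S be a 2×3 real matrix such that S J Sᵀ is invertible. Then the 3×3 matrix M := P J Pᵀ − P J Sᵀ (S J Sᵀ)⁻¹ S J Pᵀ is positive semidefinite and has rank at most one. -/
open Matrix

/-!
Put `K = S J Sᵀ` and `Q = 1 - Sᵀ K⁻¹ S J`, the `J`-orthogonal projection along the row space
of `S`. Since `S J Q = 0`, one has `J Q = Qᵀ J Q`, and the matrix in question is
`P (Qᵀ J Q) Pᵀ = P J Q Pᵀ`. The first form is a congruence of `J`, hence positive semidefinite.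
For the rank, `S J` has rank `2` because `(S J) Sᵀ` is invertible, so `(S J) Q = 0` forces
`rank Q ≤ 3 - 2 = 1`.
-/

/-- Structural content of Theorem 1: the net NLOS information gain
P J Pᵀ − P J Sᵀ (S J Sᵀ)⁻¹ S J Pᵀ is positive semidefinite of rank at most one. -/
theorem net_nlos_gain_structure (J : Matrix (Fin 3) (Fin 3) ℝ) (hJ : J.PosDef)
    (P : Matrix (Fin 3) (Fin 3) ℝ) (S : Matrix (Fin 2) (Fin 3) ℝ)
    (hS : IsUnit (S * J * Sᵀ)) :
    let M : Matrix (Fin 3) (Fin 3) ℝ :=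
      P * J * Pᵀ - P * J * Sᵀ * (S * J * Sᵀ)⁻¹ * (S * J * Pᵀ)
    M.PosSemidef ∧ M.rank ≤ 1 := by
  intro M
  have hJt : Jᵀ = J := by
    simpa [conjTranspose_eq_transpose_of_trivial] using hJ.isHermitian.eq
  have hKdet : IsUnit (S * J * Sᵀ).det := (isUnit_iff_isUnit_det _).mp hS
  set Q : Matrix (Fin 3) (Fin 3) ℝ := 1 - Sᵀ * (S * J * Sᵀ)⁻¹ * (S * J) with hQ
  have hSQ : S * J * Q = 0 := by
    have h : S * J * (Sᵀ * (S * J * Sᵀ)⁻¹ * (S * J))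
        = (S * J * Sᵀ) * (S * J * Sᵀ)⁻¹ * (S * J) := by
      simp only [Matrix.mul_assoc]
    rw [hQ, Matrix.mul_sub, Matrix.mul_one, h, mul_nonsing_inv _ hKdet, Matrix.one_mul, sub_self]
  have hM : M = P * J * Q * Pᵀ := by
    simp only [M, hQ, Matrix.mul_sub, Matrix.sub_mul, Matrix.mul_one, Matrix.mul_assoc]
  have hQJQ : Qᵀ * J * Q = J * Q := by
    have hQt : Qᵀ = 1 - J * Sᵀ * (S * J * Sᵀ)⁻¹ * S := by
      simp only [hQ, transpose_sub, transpose_one, transpose_mul, transpose_nonsing_inv,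
        transpose_transpose, hJt, Matrix.mul_assoc]
    have h : J * Sᵀ * (S * J * Sᵀ)⁻¹ * S * J * Q
        = J * Sᵀ * (S * J * Sᵀ)⁻¹ * (S * J * Q) := by
      simp only [Matrix.mul_assoc]
    rw [hQt, Matrix.sub_mul, Matrix.sub_mul, Matrix.one_mul, h, hSQ, Matrix.mul_zero, sub_zero]
  constructor
  · have h := (hJ.posSemidef.conjTranspose_mul_mul_same Q).mul_mul_conjTranspose_same P
    rw [conjTranspose_eq_transpose_of_trivial, conjTranspose_eq_transpose_of_trivial, hQJQ,
      ← Matrix.mul_assoc P J Q, ← hM] at h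
    exact h
  · have hSJ : 2 ≤ (S * J).rank := by
      have h := rank_mul_le_left (S * J) Sᵀ
      rwa [rank_of_isUnit _ hS, Fintype.card_fin] at h
    have hsum : (S * J).rank + Q.rank ≤ 3 := by
      simpa using rank_add_rank_le_card_of_mul_eq_zero hSQ
    have hMQ : M.rank ≤ Q.rank := by
      rw [hM]
      exact (rank_mul_le_left _ _).trans (rank_mul_le_right _ _)
    omega
end

section
/- Let J be an n×n real symmetric positive definite matrix, let v ∈ ℝⁿ, and let λ ≥ 0. Then J + λ v vᵀ is positive definite, and for every index i, the i-th diagonal entry of (J + λ v vᵀ)⁻¹ is less than or equal to the i-th diagonal entry of J⁻¹. In particular, for n = 3, the position error bound PEB(J) := √(((J⁻¹)₁₁ + (J⁻¹)₂₂)) satisfies PEB(J + λ v vᵀ) ≤ PEB(J). -/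
/-!
For `J` positive definite, `P` positive semidefinite and `K = J + P`, applying the resolvent
identity `J⁻¹ - K⁻¹ = K⁻¹ P J⁻¹ = J⁻¹ P K⁻¹` twice gives
`J⁻¹ - K⁻¹ = K⁻¹ P K⁻¹ + K⁻¹ P J⁻¹ P K⁻¹`.
Both summands are congruences of positive semidefinite matrices, so `J⁻¹ - K⁻¹` is positive
semidefinite and in particular has nonnegative diagonal. The rank-one update is the case
`P = l • v vᵀ`, and the bound on the square roots follows by monotonicity.
-/

open Matrix

/-- Antitonicity of the matrix inverse in the Loewner order. -/
lemma posSemidef_inv_sub_inv_add {n : Type*} [Fintype n] [DecidableEq n]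
    {J P : Matrix n n ℝ} (hJ : J.PosDef) (hP : P.PosSemidef) :
    (J⁻¹ - (J + P)⁻¹).PosSemidef := by
  have hK : (J + P).PosDef := hJ.add_posSemidef hP
  obtain ⟨K, hKdef⟩ : ∃ K, K = J + P := ⟨_, rfl⟩
  rw [← hKdef] at hK ⊢
  have hPK : P = K - J := by rw [hKdef]; abel
  have uJ : IsUnit J.det := (Matrix.isUnit_iff_isUnit_det J).mp hJ.isUnit
  have uK : IsUnit K.det := (Matrix.isUnit_iff_isUnit_det K).mp hK.isUnit
  have left_resolvent : J⁻¹ - K⁻¹ = K⁻¹ * P * J⁻¹ := by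
    rw [hPK, Matrix.mul_sub, Matrix.sub_mul, Matrix.nonsing_inv_mul _ uK, Matrix.one_mul,
      Matrix.mul_assoc, Matrix.mul_nonsing_inv _ uJ, Matrix.mul_one]
  have right_resolvent : J⁻¹ - K⁻¹ = J⁻¹ * P * K⁻¹ := by
    rw [hPK, Matrix.mul_sub, Matrix.sub_mul, Matrix.nonsing_inv_mul _ uJ, Matrix.one_mul,
      Matrix.mul_assoc, Matrix.mul_nonsing_inv _ uK, Matrix.mul_one]
  have key : J⁻¹ - K⁻¹ = K⁻¹ * P * K⁻¹ + (K⁻¹ * P) * J⁻¹ * (P * K⁻¹) := by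
    calc J⁻¹ - K⁻¹ = K⁻¹ * P * J⁻¹ := left_resolvent
      _ = K⁻¹ * P * (K⁻¹ + J⁻¹ * P * K⁻¹) := by rw [← right_resolvent, add_sub_cancel]
      _ = _ := by simp only [Matrix.mul_add, Matrix.mul_assoc]
  have hKi : (K⁻¹)ᴴ = K⁻¹ := hK.inv.isHermitian
  have h₁ : (K⁻¹ * P * K⁻¹).PosSemidef := by
    have h := hP.conjTranspose_mul_mul_same K⁻¹
    rwa [hKi] at h
  have h₂ : ((K⁻¹ * P) * J⁻¹ * (P * K⁻¹)).PosSemidef := by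
    have h := hJ.inv.posSemidef.conjTranspose_mul_mul_same (P * K⁻¹)
    rwa [Matrix.conjTranspose_mul, hKi, hP.isHermitian.eq] at h
  rw [key]
  exact h₁.add h₂

lemma posSemidef_smul_vecMulVec {n : Type*} [Fintype n] (v : n → ℝ) {l : ℝ} (hl : 0 ≤ l) :
    (l • vecMulVec v v).PosSemidef := by
  have h := posSemidef_vecMulVec_self_star v
  rw [star_trivial] at h
  exact h.smul hl

lemma inv_add_smul_vecMulVec_diag_le {n : Type*} [Fintype n] [DecidableEq n]
    {J : Matrix n n ℝ} (hJ : J.PosDef) (v : n → ℝ) {l : ℝ} (hl : 0 ≤ l) (i : n) :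
    (J + l • vecMulVec v v)⁻¹ i i ≤ J⁻¹ i i := by
  have h := (posSemidef_inv_sub_inv_add hJ (posSemidef_smul_vecMulVec v hl)).diag_nonneg (i := i)
  rwa [Matrix.sub_apply, sub_nonneg] at h

/-- Adding the rank-one PSD Fisher information λ v vᵀ of an NLOS path to a
positive definite EFIM keeps it positive definite, never increases any diagonal
entry of the inverse, and in particular never increases the position error
bound PEB(J) = √((J⁻¹)₁₁ + (J⁻¹)₂₂) in the 3×3 case. -/
theorem rank_one_update_reduces_peb {n : Type*} [Fintype n] [DecidableEq n]
    (J : Matrix n n ℝ) (hJ : J.PosDef) (v : n → ℝ) (l : ℝ) (hl : 0 ≤ l) :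
    (J + l • vecMulVec v v).PosDef ∧
    (∀ i : n, (J + l • vecMulVec v v)⁻¹ i i ≤ J⁻¹ i i) ∧
    (∀ (J₃ : Matrix (Fin 3) (Fin 3) ℝ), J₃.PosDef →
      ∀ (v₃ : Fin 3 → ℝ) (l₃ : ℝ), 0 ≤ l₃ →
        Real.sqrt ((J₃ + l₃ • vecMulVec v₃ v₃)⁻¹ 0 0 +
                   (J₃ + l₃ • vecMulVec v₃ v₃)⁻¹ 1 1) ≤
          Real.sqrt (J₃⁻¹ 0 0 + J₃⁻¹ 1 1)) := by
  exact ⟨hJ.add_posSemidef (posSemidef_smul_vecMulVec v hl),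
    inv_add_smul_vecMulVec_diag_le hJ v hl,
    fun _ hJ₃ v₃ _ hl₃ => Real.sqrt_le_sqrt
      (add_le_add (inv_add_smul_vecMulVec_diag_le hJ₃ v₃ hl₃ 0)
        (inv_add_smul_vecMulVec_diag_le hJ₃ v₃ hl₃ 1))⟩
end

section
/- Let θ ∈ ℝ, D > 0, and λ_R, λ_D, λ_A > 0. Define r := (cos θ, sin θ, 0)ᵀ, w := (−sin θ, cos θ, 0)ᵀ, and u := (sin θ, −cos θ, D)ᵀ in ℝ³. Then the 3×3 real matrix λ_R r rᵀ + λ_D w wᵀ + λ_A u uᵀ is symmetric positive definite (in particular, invertible). -/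
/-!
The quadratic form of the matrix is
`x ↦ lR * (r ⬝ᵥ x) ^ 2 + lD * (w ⬝ᵥ x) ^ 2 + lA * (u ⬝ᵥ x) ^ 2`, a sum of squares with positive
weights. It is positive away from `0` because `r`, `w`, `u` span: `r` and `w` form an orthonormal
basis of the horizontal plane, and `u` has the nonzero vertical component `D`.
-/

open Matrix Real

lemma dotProduct_vecMulVec_self_mulVec (v x : Fin 3 → ℝ) :
    x ⬝ᵥ (vecMulVec v v *ᵥ x) = (v ⬝ᵥ x) ^ 2 := by
  simp only [vecMulVec_apply, mulVec, dotProduct, Fin.sum_univ_three]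
  ring

lemma isHermitian_smul_vecMulVec_self (c : ℝ) (v : Fin 3 → ℝ) :
    (c • vecMulVec v v).IsHermitian := by
  ext i j
  simp [vecMulVec_apply, mul_comm (v i)]

/-- A positive combination of `vvᵀ` over three vectors `v` with no common nonzero orthogonal
vector is positive definite. -/
lemma posDef_sum_vecMulVec {a b c : ℝ} (ha : 0 < a) (hb : 0 < b) (hc : 0 < c)
    {r w u : Fin 3 → ℝ}
    (h : ∀ x : Fin 3 → ℝ, r ⬝ᵥ x = 0 → w ⬝ᵥ x = 0 → u ⬝ᵥ x = 0 → x = 0) :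
    (a • vecMulVec r r + b • vecMulVec w w + c • vecMulVec u u).PosDef := by
  refine PosDef.of_dotProduct_mulVec_pos
    (((isHermitian_smul_vecMulVec_self a r).add (isHermitian_smul_vecMulVec_self b w)).add
      (isHermitian_smul_vecMulVec_self c u)) fun x hx => ?_
  simp only [star_trivial, add_mulVec, smul_mulVec, dotProduct_add, dotProduct_smul,
    dotProduct_vecMulVec_self_mulVec, smul_eq_mul]
  by_cases hr : r ⬝ᵥ x = 0
  · by_cases hw : w ⬝ᵥ x = 0
    · have hu : u ⬝ᵥ x ≠ 0 := fun hu => hx (h x hr hw hu)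
      positivity
    · positivity
  · positivity

/-- The LOS information gain matrix, as the sum of the three rank-one TOA, AOD
and AOA contributions, is symmetric positive definite (hence invertible). -/
theorem los_gain_full_rank (θ D lR lD lA : ℝ) (hD : 0 < D)
    (hlR : 0 < lR) (hlD : 0 < lD) (hlA : 0 < lA) :
    let r : Fin 3 → ℝ := ![Real.cos θ, Real.sin θ, 0]
    let w : Fin 3 → ℝ := ![-Real.sin θ, Real.cos θ, 0]
    let u : Fin 3 → ℝ := ![Real.sin θ, -Real.cos θ, D]
    let M : Matrix (Fin 3) (Fin 3) ℝ :=
      lR • vecMulVec r r + lD • vecMulVec w w + lA • vecMulVec u u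
    M.PosDef ∧ M.det ≠ 0 := by
  intro r w u M
  have hM : M.PosDef := by
    refine posDef_sum_vecMulVec hlR hlD hlA fun x hr hw hu => ?_
    simp only [r, w, u, dotProduct, Fin.sum_univ_three, cons_val] at hr hw hu
    have hcs := Real.sin_sq_add_cos_sq θ
    have h0 : x 0 = 0 := by
      linear_combination Real.cos θ * hr - Real.sin θ * hw - x 0 * hcs
    have h1 : x 1 = 0 := by
      linear_combination Real.sin θ * hr + Real.cos θ * hw - x 1 * hcs
    -- The horizontal part of `u` is `-w`, so adding the two equations isolates `D * x 2`.
    have h2 : D * x 2 = 0 := by linear_combination hu + hw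
    ext i
    fin_cases i
    · exact h0
    · exact h1
    · exact (mul_eq_zero.mp h2).resolve_left hD.ne'
  exact ⟨hM, hM.det_pos.ne'⟩
end

section
/- Let θ_R, θ_T ∈ ℝ and let c, σ_τ, σ_T, σ_R, d_p, d_q > 0 be real constants. Define the 3×3 real matrix P with columns (−cos θ_R/c, −sin θ_R/c, 0)ᵀ, (0, 0, 0)ᵀ, (sin θ_R/d_p, −cos θ_R/d_p, −1)ᵀ; the 2×3 real matrix S with columns ((cos θ_T + cos θ_R)/c, (sin θ_T + sin θ_R)/c)ᵀ, (−sin θ_T/d_q, cos θ_T/d_q)ᵀ, (−sin θ_R/d_p, cos θ_R/d_p)ᵀ; and the diagonal matrix J := diag(1/σ_τ², 1/σ_T², 1/σ_R²). Assume S J Sᵀ is invertible, and set M := P J Pᵀ − P J Sᵀ (S J Sᵀ)⁻¹ S J Pᵀ and Δθ := θ_R − θ_T. Then trace(M) = (2 + d_p²(1 + cos Δθ)) / ((1 − cos Δθ)·c²σ_τ² + (1 + cos Δθ)·(d_p²σ_R² + d_q²σ_T²)). -/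
/-!
Write `G = S J Sᵀ` and let `n = S₀ × S₁ ∈ ℝ³` be the cross product of the rows of `S`, which spans
`ker S` when `S` has rank two. Since `J - J Sᵀ G⁻¹ S J` annihilates the row space of `S`, it is a
multiple of `n nᵀ`; in division-free form
`det G • J - J Sᵀ (adj G) S J = det J • n nᵀ` (`gain_core`), while Cauchy–Binet gives
`det G = det J * nᵀ J⁻¹ n` (`det_gram`). Hence `M = (P n)(P n)ᵀ / (nᵀ J⁻¹ n)` has trace
`‖P n‖² / (nᵀ J⁻¹ n)` (`det_mul_trace_gain`).

For the given matrices, with `C = cos (θR - θT)`,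
`n = (sin (θR - θT) / (dp dq), -(1 + C) / (c dp), (1 + C) / (c dq))`,
and both `‖P n‖²` and `nᵀ J⁻¹ n` contain the factor `1 + C`, because
`sin² (θR - θT) = (1 - C) (1 + C)`. Invertibility of `G` forces `1 + C ≠ 0`, so the factor cancels.
-/

open Matrix Real

/-- Cauchy–Binet for `S * diagonal w * Sᵀ`: the `2 × 2` minors of `S` are the entries of the cross
product of its rows. -/
lemma det_gram (S : Matrix (Fin 2) (Fin 3) ℝ) (w : Fin 3 → ℝ) :
    (S * diagonal w * Sᵀ).det =
      w 1 * w 2 * (crossProduct (S 0) (S 1) 0) ^ 2 + w 0 * w 2 * (crossProduct (S 0) (S 1) 1) ^ 2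
        + w 0 * w 1 * (crossProduct (S 0) (S 1) 2) ^ 2 := by
  simp [det_fin_two, Matrix.mul_apply, Fin.sum_univ_three, cross_apply, diagonal_apply]
  ring

/-- Division-free form of `J - J Sᵀ G⁻¹ S J = n nᵀ / (nᵀ J⁻¹ n)`, with `n` the cross product of
the rows of `S`. -/
lemma gain_core (S : Matrix (Fin 2) (Fin 3) ℝ) (w : Fin 3 → ℝ) :
    (S * diagonal w * Sᵀ).det • diagonal w
        - diagonal w * Sᵀ * (S * diagonal w * Sᵀ).adjugate * (S * diagonal w) =
      (w 0 * w 1 * w 2) • vecMulVec (crossProduct (S 0) (S 1)) (crossProduct (S 0) (S 1)) := by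
  rw [det_gram]
  ext i j
  fin_cases i <;> fin_cases j <;>
    simp [adjugate_fin_two, Matrix.mul_apply, Fin.sum_univ_three, Fin.sum_univ_two, cross_apply,
      diagonal_apply] <;>
    ring

/-- Sandwiching `gain_core` between `P` and `Pᵀ` and taking traces, where `tr (v vᵀ) = v ⬝ᵥ v` with
`v = P n`. -/
lemma det_mul_trace_gain (P : Matrix (Fin 3) (Fin 3) ℝ) (S : Matrix (Fin 2) (Fin 3) ℝ)
    (w : Fin 3 → ℝ) (h : (S * diagonal w * Sᵀ).det ≠ 0) :
    (S * diagonal w * Sᵀ).det *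
      (P * diagonal w * Pᵀ - P * diagonal w * Sᵀ * (S * diagonal w * Sᵀ)⁻¹ *
        (S * diagonal w * Pᵀ)).trace =
      w 0 * w 1 * w 2 *
        ((P *ᵥ crossProduct (S 0) (S 1)) ⬝ᵥ (P *ᵥ crossProduct (S 0) (S 1))) := by
  have key : (S * diagonal w * Sᵀ).det •
      (P * diagonal w * Pᵀ - P * diagonal w * Sᵀ * (S * diagonal w * Sᵀ)⁻¹ *
        (S * diagonal w * Pᵀ)) =
      P * ((S * diagonal w * Sᵀ).det • diagonal w
        - diagonal w * Sᵀ * (S * diagonal w * Sᵀ).adjugate * (S * diagonal w)) * Pᵀ := by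
    have hadj : (S * diagonal w * Sᵀ).adjugate =
        (S * diagonal w * Sᵀ).det • (S * diagonal w * Sᵀ)⁻¹ := by
      rw [Matrix.inv_def, smul_smul, Ring.inverse_eq_inv', mul_inv_cancel₀ h, one_smul]
    rw [hadj]
    generalize (S * diagonal w * Sᵀ).det = d
    generalize (S * diagonal w * Sᵀ)⁻¹ = G
    simp only [smul_sub, Matrix.mul_sub, Matrix.sub_mul, Matrix.mul_smul, Matrix.smul_mul,
      Matrix.mul_assoc]
  rw [← smul_eq_mul, ← trace_smul, key, gain_core, Matrix.mul_smul, Matrix.smul_mul, trace_smul,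
    mul_vecMulVec, vecMulVec_mul, vecMul_transpose, trace_vecMulVec, smul_eq_mul]

/-- Closed-form nonzero eigenvalue (equation (34)): the trace of the rank-one
net NLOS information gain matrix M = P J Pᵀ − P J Sᵀ (S J Sᵀ)⁻¹ S J Pᵀ. -/
theorem nlos_eigenvalue_closed_form (θR θT c στ σT σR dp dq : ℝ)
    (hc : 0 < c) (hστ : 0 < στ) (hσT : 0 < σT) (hσR : 0 < σR)
    (hdp : 0 < dp) (hdq : 0 < dq) :
    let p₁ : Fin 3 → ℝ := ![-Real.cos θR / c, -Real.sin θR / c, 0]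
    let p₂ : Fin 3 → ℝ := ![0, 0, 0]
    let p₃ : Fin 3 → ℝ := ![Real.sin θR / dp, -Real.cos θR / dp, -1]
    let P : Matrix (Fin 3) (Fin 3) ℝ := (Matrix.of ![p₁, p₂, p₃])ᵀ
    let s₁ : Fin 2 → ℝ := ![(Real.cos θT + Real.cos θR) / c, (Real.sin θT + Real.sin θR) / c]
    let s₂ : Fin 2 → ℝ := ![-Real.sin θT / dq, Real.cos θT / dq]
    let s₃ : Fin 2 → ℝ := ![-Real.sin θR / dp, Real.cos θR / dp]
    let S : Matrix (Fin 2) (Fin 3) ℝ := (Matrix.of ![s₁, s₂, s₃])ᵀ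
    let J : Matrix (Fin 3) (Fin 3) ℝ :=
      Matrix.diagonal ![1 / στ ^ 2, 1 / σT ^ 2, 1 / σR ^ 2]
    IsUnit (S * J * Sᵀ) →
      (P * J * Pᵀ - P * J * Sᵀ * (S * J * Sᵀ)⁻¹ * (S * J * Pᵀ)).trace =
        (2 + dp ^ 2 * (1 + Real.cos (θR - θT))) /
          ((1 - Real.cos (θR - θT)) * c ^ 2 * στ ^ 2 +
            (1 + Real.cos (θR - θT)) * (dp ^ 2 * σR ^ 2 + dq ^ 2 * σT ^ 2)) := by
  intro p₁ p₂ p₃ P s₁ s₂ s₃ S J hU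
  have hdet : (S * J * Sᵀ).det ≠ 0 := ((Matrix.isUnit_iff_isUnit_det _).1 hU).ne_zero
  have htr := det_mul_trace_gain P S _ hdet
  have hR := Real.sin_sq_add_cos_sq θR
  have hT := Real.sin_sq_add_cos_sq θT
  have hΔ := Real.sin_sq_add_cos_sq (θR - θT)
  have hC : Real.cos (θR - θT) = Real.cos θR * Real.cos θT + Real.sin θR * Real.sin θT :=
    Real.cos_sub θR θT
  have hS : Real.sin (θR - θT) = Real.sin θR * Real.cos θT - Real.cos θR * Real.sin θT :=
    Real.sin_sub θR θT
  set C := Real.cos (θR - θT) with hCdef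
  set D := Real.sin (θR - θT) with hDdef
  have hn : crossProduct (S 0) (S 1) =
      ![D / (dp * dq), -(1 + C) / (c * dp), (1 + C) / (c * dq)] := by
    ext i
    fin_cases i
    · simp [S, s₁, s₂, s₃, cross_apply]
      rw [hS]; field_simp; ring
    · simp [S, s₁, s₂, s₃, cross_apply]
      rw [hC]; field_simp; linear_combination -hR
    · simp [S, s₁, s₂, s₃, cross_apply]
      rw [hC]; field_simp; linear_combination hT
  have hsq : D ^ 2 = (1 - C) * (1 + C) := by linear_combination hΔ
  have hdetv : (S * J * Sᵀ).det = (1 + C) *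
      ((1 - C) * c ^ 2 * στ ^ 2 + (1 + C) * (dp ^ 2 * σR ^ 2 + dq ^ 2 * σT ^ 2)) /
        (c ^ 2 * dp ^ 2 * dq ^ 2 * στ ^ 2 * σT ^ 2 * σR ^ 2) := by
    rw [det_gram, hn]
    simp
    field_simp
    rw [hsq]
    ring
  have hPn : (P *ᵥ crossProduct (S 0) (S 1)) ⬝ᵥ (P *ᵥ crossProduct (S 0) (S 1)) =
      (1 + C) * (2 + dp ^ 2 * (1 + C)) / (c ^ 2 * dp ^ 2 * dq ^ 2) := by
    rw [hn]
    simp [P, p₁, p₂, p₃, Matrix.mulVec, dotProduct, Fin.sum_univ_three]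
    field_simp
    linear_combination (D ^ 2 + (1 + C) ^ 2) * hR + hsq
  change (S * J * Sᵀ).det * (P * J * Pᵀ - P * J * Sᵀ * (S * J * Sᵀ)⁻¹ * (S * J * Pᵀ)).trace = _
    at htr
  rw [hPn] at htr
  rw [hdetv] at htr hdet
  -- Invertibility of the Gram matrix rules out `C = -1` and a vanishing denominator.
  have hne := (div_ne_zero_iff.1 hdet).1
  have h1 : 1 + C ≠ 0 := left_ne_zero_of_mul hne
  have h2 := right_ne_zero_of_mul hne
  rw [eq_div_iff h2]
  generalize (P * J * Pᵀ - P * J * Sᵀ * (S * J * Sᵀ)⁻¹ * (S * J * Pᵀ)).trace = t at htr ⊢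
  simp at htr
  field_simp at htr
  linear_combination htr
end
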